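/- Let d ≥ 2 and let H be a finite hypergraph of d-intervals. Then τ*(H) ≤ (4d − 6 + 3/d)·ν(H). -/

import Mathlib

/-- A `d`-interval: a union of at most `d` pairwise disjoint closed intervals
on the real line. -/
def IsDInterval (d : ℕ) (h : Set ℝ) : Prop :=
  ∃ (n : ℕ) (a b : Fin n → ℝ), n ≤ d ∧ (∀ i, a i ≤ b i) ∧
    (Set.univ : Set (Fin n)).PairwiseDisjoint (fun i => Set.Icc (a i) (b i)) ∧
    h = ⋃ i, Set.Icc (a i) (b i)

/-- The matching number: the maximum size of a set of pairwise disjoint edges. -/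
noncomputable def nu {α : Type*} (H : Set (Set α)) : ℕ :=
  sSup {n | ∃ M : Finset (Set α), ↑M ⊆ H ∧
    (M : Set (Set α)).PairwiseDisjoint id ∧ M.card = n}

/-- The fractional covering number: the infimum of `∑ₓ f x` over finitely
supported nonnegative `f : α → ℝ` with `∑_{x ∈ e} f x ≥ 1` for every edge `e`. -/
noncomputable def tauStar {α : Type*} (H : Set (Set α)) : ℝ :=
  sInf {t | ∃ f : α → ℝ, (Function.support f).Finite ∧ (∀ x, 0 ≤ f x) ∧
    (∀ e ∈ H, 1 ≤ ∑ᶠ x ∈ e, f x) ∧ t = ∑ᶠ x, f x}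


namespace DInt
open Finset

/-- `J` is dominating with respect to the rows `R`. -/
def Dom {K I : Type*} (c : I → K → ℕ) (J : Finset K) (R : Finset I) : Prop :=
  ∀ k, ∃ i ∈ R, ∀ j ∈ J, c i j ≤ c i k

theorem dom_core {K I : Type*} [Fintype K] [DecidableEq K] [DecidableEq I]
    (c : I → K → ℕ) (hc : ∀ i, Function.Injective (c i))
    (J : Finset K) (R : Finset I) (hJ : J.Nonempty) (hcard : R.card = J.card + 1)
    [DecidablePred fun k => k ∉ J ∧ Dom c (insert k J) R]
    [DecidablePred fun i => Dom c J (R.erase i)] :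
    Even (#{k | k ∉ J ∧ Dom c (insert k J) R} + #{i ∈ R | Dom c J (R.erase i)}) := by
  classical
  by_cases hD : Dom c J R
  swap
  · have h1 : ({k | k ∉ J ∧ Dom c (insert k J) R} : Finset K) = ∅ := by
      rw [filter_eq_empty_iff]
      rintro k - ⟨-, h⟩
      exact hD fun k' => by
        obtain ⟨i, hi, h'⟩ := h k'
        exact ⟨i, hi, fun j hj => h' j (mem_insert_of_mem hj)⟩
    have h2 : ({i ∈ R | Dom c J (R.erase i)} : Finset I) = ∅ := by
      rw [filter_eq_empty_iff]
      rintro i - h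
      exact hD fun k' => by
        obtain ⟨i, hi, h'⟩ := h k'
        exact ⟨i, mem_of_mem_erase hi, h'⟩
    rw [h1, h2]; simp
  have ha : ∀ i, ∃ a ∈ J, ∀ j ∈ J, c i j ≤ c i a := fun i => exists_max_image J (c i) hJ
  choose a haJ hamax using ha
  have hauniq : ∀ i, ∀ j ∈ J, (∀ j' ∈ J, c i j' ≤ c i j) → a i = j := by
    intro i j hj h
    exact hc i (le_antisymm (h _ (haJ i)) (hamax i j hj))
  have hsurj : ∀ j ∈ J, ∃ i ∈ R, a i = j := by
    intro j hj
    obtain ⟨i, hi, h⟩ := hD j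
    exact ⟨i, hi, hauniq i j hj h⟩
  obtain ⟨i1, hi1, i2, hi2, hne, heq⟩ := exists_ne_map_eq_of_card_lt_of_maps_to
    (s := R) (t := J) (f := a) (by omega) (fun i _ => haJ i)
  have hinj : ∀ i ∈ R, (∀ j ∈ J, ∃ i' ∈ R.erase i, a i' = j) →
      Set.InjOn a (R.erase i : Finset I) := by
    intro i hi h
    apply Finset.injOn_of_surjOn_of_card_le (t := J) a (fun i _ => haJ i)
    · intro j hj
      obtain ⟨i', h1, h2⟩ := h j hj
      exact ⟨i', h1, h2⟩
    · rw [card_erase_of_mem hi]; omega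
  have hpair : ∀ i ∈ R, (∀ j ∈ J, ∃ i' ∈ R.erase i, a i' = j) → i = i1 ∨ i = i2 := by
    intro i hi h
    by_contra hcon
    push Not at hcon
    exact hne (hinj i hi h (mem_coe.2 (mem_erase.2 ⟨hcon.1.symm, hi1⟩))
      (mem_coe.2 (mem_erase.2 ⟨hcon.2.symm, hi2⟩)) heq)
  have hpair' : ∀ i, i = i1 ∨ i = i2 → (∀ j ∈ J, ∃ i' ∈ R.erase i, a i' = j) := by
    intro i hi j hj
    obtain ⟨i', hi', h⟩ := hsurj j hj
    by_cases hii : i' = i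
    · rcases hi with hi | hi
      · exact ⟨i2, mem_erase.2 ⟨by rw [hi]; exact hne.symm, hi2⟩, by
          rw [← heq, ← hi, ← hii]; exact h⟩
      · exact ⟨i1, mem_erase.2 ⟨by rw [hi]; exact hne, hi1⟩, by
          rw [heq, ← hi, ← hii]; exact h⟩
    · exact ⟨i', mem_erase.2 ⟨hii, hi'⟩, h⟩
  let Q : I → Finset K := fun i => univ.filter (fun k => ∀ i' ∈ R.erase i, c i' k < c i' (a i'))
  have memQ : ∀ i k, k ∈ Q i ↔ ∀ i' ∈ R.erase i, c i' k < c i' (a i') := by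
    intro i k; simp only [Q, mem_filter, mem_univ, true_and]
  let B : I → Finset K := fun i => (Q i).filter (fun k => ∀ k' ∈ Q i, c i k ≤ c i k')
  have hBcard : ∀ i, (B i).card = if Q i = ∅ then 0 else 1 := by
    intro i
    split_ifs with h
    · simp [B, h]
    · obtain ⟨k, hk, hmin⟩ := exists_min_image (Q i) (c i) (nonempty_iff_ne_empty.2 h)
      rw [card_eq_one]
      refine ⟨k, ?_⟩
      ext k'
      simp only [B, mem_filter, mem_singleton]
      constructor
      · rintro ⟨h1, h2⟩
        exact hc i (le_antisymm (h2 _ hk) (hmin _ h1))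
      · rintro rfl; exact ⟨hk, hmin⟩
  have hAR : ({i ∈ R | Dom c J (R.erase i)} : Finset I) =
      ({i1, i2} : Finset I).filter (fun i => Q i = ∅) := by
    ext i
    simp only [mem_filter, mem_insert, mem_singleton]
    constructor
    · rintro ⟨hi, h⟩
      refine ⟨hpair i hi ?_, ?_⟩
      · intro j hj
        obtain ⟨i', hi', h'⟩ := h j
        exact ⟨i', hi', hauniq i' j hj h'⟩
      · rw [eq_empty_iff_forall_notMem]
        intro k hk
        rw [memQ] at hk
        obtain ⟨i', hi', h'⟩ := h k
        exact absurd (hk i' hi') (not_lt.2 (h' _ (haJ _)))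
    · rintro ⟨hi, h⟩
      refine ⟨by rcases hi with rfl | rfl <;> assumption, fun k => ?_⟩
      have hk : k ∉ Q i := by rw [h]; simp
      rw [memQ] at hk
      push Not at hk
      obtain ⟨i', hi', h'⟩ := hk
      exact ⟨i', hi', fun j hj => (hamax i' j hj).trans h'⟩
  have hAJ : ({k | k ∉ J ∧ Dom c (insert k J) R} : Finset K) = B i1 ∪ B i2 := by
    have key : ∀ k, (k ∉ J ∧ Dom c (insert k J) R) ↔ ∃ i, (i = i1 ∨ i = i2) ∧ k ∈ B i := by
      intro k
      constructor
      · rintro ⟨hkJ, h⟩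
        obtain ⟨i, hi, hik⟩ := h k
        have hlt : c i (a i) < c i k := lt_of_le_of_ne (hik _ (mem_insert_of_mem (haJ i)))
          (fun h' => hkJ (by rw [← hc i h']; exact haJ i))
        have hall : ∀ j ∈ J, ∃ i' ∈ R.erase i, a i' = j ∧ c i' k < c i' (a i') := by
          intro j hj
          obtain ⟨i', hi', h'⟩ := h j
          have haj : a i' = j := hauniq i' j hj (fun j' hj' => h' j' (mem_insert_of_mem hj'))
          have hlt' : c i' k < c i' (a i') := by
            rw [haj]
            exact lt_of_le_of_ne (h' k (mem_insert_self _ _)) (fun h'' => hkJ (by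
              rw [hc i' h'']; exact hj))
          refine ⟨i', mem_erase.2 ⟨?_, hi'⟩, haj, hlt'⟩
          rintro rfl
          exact lt_asymm hlt hlt'
        have hs : ∀ j ∈ J, ∃ i' ∈ R.erase i, a i' = j := fun j hj => by
          obtain ⟨i', h1, h2, _⟩ := hall j hj; exact ⟨i', h1, h2⟩
        have hkQ : k ∈ Q i := by
          rw [memQ]
          intro i'' hi''
          obtain ⟨i', h1, h2, h3⟩ := hall (a i'') (haJ _)
          have := hinj i hi hs (mem_coe.2 h1) (mem_coe.2 hi'') h2
          rw [← this]; exact h3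
        refine ⟨i, hpair i hi hs, ?_⟩
        simp only [B, mem_filter]
        refine ⟨hkQ, fun k' hk' => ?_⟩
        obtain ⟨i', hi', h'⟩ := h k'
        by_cases hii : i' = i
        · subst hii; exact h' k (mem_insert_self _ _)
        · have h1 := (memQ i k').1 hk' i' (mem_erase.2 ⟨hii, hi'⟩)
          have h2 := h' _ (mem_insert_of_mem (haJ i'))
          omega
      · rintro ⟨i, hi, hkB⟩
        have hiR : i ∈ R := by rcases hi with rfl | rfl <;> assumption
        simp only [B, mem_filter] at hkB
        obtain ⟨hkQ, hmin⟩ := hkB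
        have hkQ' := (memQ i k).1 hkQ
        refine ⟨?_, ?_⟩
        · intro hkJ
          obtain ⟨i', hi', h'⟩ := hpair' i hi k hkJ
          have := hkQ' i' hi'
          rw [h'] at this
          exact lt_irrefl _ this
        · intro k'
          by_cases hk' : k' ∈ Q i
          · refine ⟨i, hiR, fun j hj => ?_⟩
            rcases mem_insert.1 hj with rfl | hj
            · exact hmin _ hk'
            · obtain ⟨i', hi', h'⟩ := hD k
              by_cases hii : i' = i
              · subst hii; exact (h' j hj).trans (hmin _ hk')
              · have h1 := hkQ' i' (mem_erase.2 ⟨hii, hi'⟩)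
                have h2 := h' _ (haJ i')
                omega
          · rw [memQ] at hk'
            push Not at hk'
            obtain ⟨i', hi', h'⟩ := hk'
            refine ⟨i', mem_of_mem_erase hi', fun j hj => ?_⟩
            rcases mem_insert.1 hj with rfl | hj
            · exact (hkQ' i' hi').le.trans h'
            · exact (hamax i' j hj).trans h'
    ext k
    simp only [mem_filter, mem_univ, true_and, mem_union]
    rw [key]
    simp
  have hdisj : Disjoint (B i1) (B i2) := by
    rw [Finset.disjoint_left]
    intro k h1 h2
    have h1' := (memQ i1 k).1 (mem_filter.1 h1).1
    have h2' := (memQ i2 k).1 (mem_filter.1 h2).1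
    obtain ⟨i, hi, h⟩ := hD k
    have h3 := h _ (haJ i)
    by_cases hii : i = i1
    · have := h2' i (mem_erase.2 ⟨by rw [hii]; exact hne, hi⟩)
      omega
    · have := h1' i (mem_erase.2 ⟨hii, hi⟩)
      omega
  rw [hAR, hAJ, card_union_of_disjoint hdisj, hBcard, hBcard, filter_insert, filter_singleton]
  split_ifs <;> simp_all

/-- The cycle property in the extended set of columns. -/
def OProp {K : Type*} {n : ℕ} (c : Fin (n+1) → K → ℕ) (D : Finset (K ⊕ Fin (n+1))) : Prop :=
  Dom c D.toLeft (D.toRight)ᶜ ∨ D = univ.map Function.Embedding.inr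

theorem dom_cycle {K : Type*} [Fintype K] [DecidableEq K] [Nonempty K] {n : ℕ}
    (c : Fin (n+1) → K → ℕ) (hc : ∀ i, Function.Injective (c i))
    [DecidablePred (OProp c)] (E : Finset (K ⊕ Fin (n+1))) (hE : E.card = n) :
    Even (#{v | v ∉ E ∧ OProp c (insert v E)}) := by
  classical
  have hEc := card_toLeft_add_card_toRight (u := E)
  have hsplit : #{v | v ∉ E ∧ OProp c (insert v E)} =
      #{k | k ∉ E.toLeft ∧ OProp c (insert (Sum.inl k) E)} +
      #{i ∈ (E.toRight)ᶜ | OProp c (insert (Sum.inr i) E)} := by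
    rw [← card_toLeft_add_card_toRight]
    congr 1
    · congr 1; ext k; simp
    · congr 1; ext k; simp
  rw [hsplit]
  have hcompl : (E.toRight)ᶜ.card = E.toLeft.card + 1 := by
    rw [card_compl, Fintype.card_fin]; omega
  by_cases hJ : E.toLeft.Nonempty
  · have := dom_core c hc E.toLeft (E.toRight)ᶜ hJ hcompl
    convert this using 3
    · ext k
      simp only [mem_filter, mem_univ, true_and]
      refine and_congr_right fun hk => ?_
      unfold OProp
      have h1 : ¬ (insert (Sum.inl k) E = univ.map Function.Embedding.inr) := by
        intro h
        have : Sum.inl k ∈ (univ.map Function.Embedding.inr : Finset (K ⊕ Fin (n+1))) := by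
          rw [← h]; exact mem_insert_self _ _
        simp at this
      simp [h1]
    · ext i
      simp only [mem_filter]
      refine and_congr_right fun hi => ?_
      unfold OProp
      have h1 : ¬ (insert (Sum.inr i) E = univ.map Function.Embedding.inr) := by
        intro h
        obtain ⟨k, hk⟩ := hJ
        have : Sum.inl k ∈ (univ.map Function.Embedding.inr : Finset (K ⊕ Fin (n+1))) := by
          rw [← h]; exact mem_insert_of_mem (by simpa using hk)
        simp at this
      simp [h1, compl_insert]
  · rw [not_nonempty_iff_eq_empty] at hJ
    rw [hJ, card_empty, zero_add, card_eq_one] at hcompl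
    obtain ⟨i, hi⟩ := hcompl
    have hER : E.toRight = {i}ᶜ := by rw [← hi, compl_compl]
    have hEi : insert (Sum.inr i) E = univ.map Function.Embedding.inr := by
      ext x
      rcases x with k | i'
      · have : k ∉ E.toLeft := by rw [hJ]; simp
        rw [mem_toLeft] at this
        simp [this]
      · by_cases h : i' = i
        · simp [h]
        · have : i' ∈ E.toRight := by rw [hER]; simp [h]
          rw [mem_toRight] at this
          simp [this]
    have h1 : #{i ∈ (E.toRight)ᶜ | OProp c (insert (Sum.inr i) E)} = 1 := by
      rw [hi, filter_singleton, if_pos (show OProp c (insert (Sum.inr i) E) from Or.inr hEi)]; simp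
    have h2 : #{k | k ∉ E.toLeft ∧ OProp c (insert (Sum.inl k) E)} = 1 := by
      obtain ⟨k0, -, hk0⟩ := exists_min_image (univ : Finset K) (c i) univ_nonempty
      rw [card_eq_one]
      refine ⟨k0, ?_⟩
      ext k
      rw [mem_filter, mem_singleton]
      simp only [mem_univ, true_and, OProp]
      have h1 : ¬ (insert (Sum.inl k) E = univ.map Function.Embedding.inr) := by
        intro h
        have : Sum.inl k ∈ (univ.map Function.Embedding.inr : Finset (K ⊕ Fin (n+1))) := by
          rw [← h]; exact mem_insert_self _ _
        simp at this
      simp only [h1, or_false, hJ, notMem_empty, not_false_eq_true, true_and, toLeft_insert_inl,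
        toRight_insert_inl, hi, Dom, mem_singleton, exists_eq_left, insert_empty_eq, forall_eq]
      constructor
      · intro h
        exact hc i (le_antisymm (h k0) (hk0 k (mem_univ _)))
      · rintro rfl k'; exact hk0 k' (mem_univ _)
    rw [h1, h2]; decide
end DInt

namespace DInt
open Finset

/-- Pairing of a mod 2 cycle with a mod 2 cocycle in a full simplex. -/
theorem parity_pairing {X : Type*} [Fintype X] [DecidableEq X] (n : ℕ) (v0 : X)
    (O F : Finset X → Prop) [DecidablePred O] [DecidablePred F]
    (hO : ∀ E : Finset X, E.card = n → Even (#{v | v ∉ E ∧ O (insert v E)}))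
    (hF : ∀ C : Finset X, C.card = n + 2 → Even (#{l ∈ C | F (C.erase l)})) :
    Even (#{D ∈ powersetCard (n+1) (univ : Finset X) | O D ∧ F D}) := by
  classical
  let o : Finset X → ZMod 2 := fun D => if O D then 1 else 0
  let f : Finset X → ZMod 2 := fun D => if F D then 1 else 0
  let g : Finset X → ZMod 2 := fun E => if v0 ∉ E then f (insert v0 E) else 0
  have hO' : ∀ E : Finset X, E.card = n → ∑ v ∈ univ.filter (fun v => v ∉ E), o (insert v E) = 0 := by
    intro E hE
    have h1 : ∑ v ∈ univ.filter (fun v => v ∉ E), o (insert v E)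
        = ((#{v | v ∉ E ∧ O (insert v E)} : ℕ) : ZMod 2) := by
      simp only [o]
      rw [Finset.sum_boole, Finset.filter_filter]
    rw [h1, ZMod.natCast_eq_zero_iff_even]
    exact hO E hE
  have hF' : ∀ C : Finset X, C.card = n + 2 → ∑ l ∈ C, f (C.erase l) = 0 := by
    intro C hC
    simp only [f]
    rw [Finset.sum_boole, ZMod.natCast_eq_zero_iff_even]
    exact hF C hC
  have hfg : ∀ D : Finset X, D.card = n + 1 → f D = ∑ l ∈ D, g (D.erase l) := by
    intro D hD
    by_cases hv : v0 ∈ D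
    · rw [Finset.sum_eq_single_of_mem v0 hv]
      · simp [g, Finset.insert_erase hv]
      · intro b hb hne
        have : v0 ∈ D.erase b := Finset.mem_erase.2 ⟨fun h => hne h.symm, hv⟩
        simp [g, this]
    · have hc := hF' (insert v0 D) (by rw [Finset.card_insert_of_notMem hv, hD])
      rw [Finset.sum_insert hv, Finset.erase_insert hv] at hc
      have h2 : ∑ x ∈ D, f ((insert v0 D).erase x) = ∑ l ∈ D, g (D.erase l) := by
        apply Finset.sum_congr rfl
        intro x hx
        have hne : v0 ≠ x := fun h => hv (h ▸ hx)
        have h3 : v0 ∉ D.erase x := fun h => hv (Finset.mem_of_mem_erase h)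
        simp only [g, h3, not_false_eq_true, if_true]
        rw [Finset.erase_insert_of_ne hne]
      rw [h2] at hc
      rw [eq_neg_of_add_eq_zero_left hc, ZMod.neg_eq_self_mod_two]
  rw [← ZMod.natCast_eq_zero_iff_even]
  have e1 : ((#{D ∈ powersetCard (n+1) (univ : Finset X) | O D ∧ F D} : ℕ) : ZMod 2)
      = ∑ D ∈ powersetCard (n+1) (univ : Finset X), o D * f D := by
    rw [← Finset.sum_boole]
    apply Finset.sum_congr rfl
    intro D _
    by_cases h1 : O D <;> by_cases h2 : F D <;> simp [o, f, h1, h2]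
  rw [e1]
  have e2 : ∑ D ∈ powersetCard (n+1) (univ : Finset X), o D * f D
      = ∑ D ∈ powersetCard (n+1) (univ : Finset X), ∑ l ∈ D, o D * g (D.erase l) := by
    apply Finset.sum_congr rfl
    intro D hD
    rw [hfg D (Finset.mem_powersetCard.1 hD).2, Finset.mul_sum]
  rw [e2, Finset.sum_sigma']
  have e3 : ∑ E ∈ powersetCard n (univ : Finset X),
      ∑ v ∈ univ.filter (fun v => v ∉ E), o (insert v E) * g E = 0 := by
    apply Finset.sum_eq_zero
    intro E hE
    rw [← Finset.sum_mul, hO' E (Finset.mem_powersetCard.1 hE).2, zero_mul]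
  rw [← e3, Finset.sum_sigma']
  refine Finset.sum_bij' (fun p _ => ⟨p.1.erase p.2, p.2⟩) (fun p _ => ⟨insert p.2 p.1, p.2⟩)
    ?_ ?_ ?_ ?_ ?_
  · rintro ⟨D, l⟩ h
    simp only [Finset.mem_sigma, Finset.mem_powersetCard, Finset.subset_univ, true_and,
      Finset.mem_filter, Finset.mem_univ] at h ⊢
    refine ⟨?_, by simp⟩
    rw [Finset.card_erase_of_mem h.2, h.1]; rfl
  · rintro ⟨E, v⟩ h
    simp only [Finset.mem_sigma, Finset.mem_powersetCard, Finset.subset_univ, true_and,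
      Finset.mem_filter, Finset.mem_univ] at h ⊢
    refine ⟨?_, by simp⟩
    rw [Finset.card_insert_of_notMem h.2, h.1]
  · rintro ⟨D, l⟩ h
    simp only [Finset.mem_sigma] at h
    simp [Finset.insert_erase h.2]
  · rintro ⟨E, v⟩ h
    simp only [Finset.mem_sigma, Finset.mem_filter, Finset.mem_univ, true_and] at h
    simp [Finset.erase_insert h.2]
  · rintro ⟨D, l⟩ h
    simp only [Finset.mem_sigma] at h
    simp [Finset.insert_erase h.2]
end DInt

namespace DInt
open Finset

/-- `D` is a feasible basis for `b`. -/
def Feas {X : Type*} [Fintype X] {n : ℕ} (v : X → Fin (n+1) → ℝ) (b : Fin (n+1) → ℝ)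
    (D : Finset X) : Prop :=
  ∃ w : X → ℝ, (∀ x ∈ D, 0 < w x) ∧ (∀ x, x ∉ D → w x = 0) ∧ ∑ x, w x • v x = b

theorem lp_cocycle {X : Type*} [Fintype X] [DecidableEq X] {n : ℕ}
    (v : X → Fin (n+1) → ℝ) (b : Fin (n+1) → ℝ) (hpos : ∀ x, 0 < ∑ i, v x i)
    (hgen : ∀ E : Finset X, E.card ≤ n → ∀ w : X → ℝ, (∀ x, x ∉ E → w x = 0) →
      ∑ x, w x • v x ≠ b)
    [DecidablePred (Feas v b)]
    (C : Finset X) (hC : C.card = n + 2) :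
    Even (#{l ∈ C | Feas v b (C.erase l)}) := by
  classical
  by_cases hne : ∃ l0 ∈ C, Feas v b (C.erase l0)
  swap
  · have : #{l ∈ C | Feas v b (C.erase l)} = 0 := by
      rw [Finset.card_eq_zero, Finset.filter_eq_empty_iff]
      intro x hx hf
      exact hne ⟨x, hx, hf⟩
    rw [this]; exact Even.zero
  obtain ⟨l0, hl0, w, wpos, wzero, wsum⟩ := hne
  -- independence
  have indep : ∀ y : X → ℝ, (∀ x, x ∉ C.erase l0 → y x = 0) → ∑ x, y x • v x = 0 → y = 0 := by
    intro y hy hs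
    by_contra hne
    obtain ⟨x0, hx0⟩ : ∃ x0, y x0 ≠ 0 := by
      by_contra h; push Not at h; exact hne (funext h)
    have hx0C : x0 ∈ C.erase l0 := by by_contra h; exact hx0 (hy _ h)
    refine hgen ((C.erase l0).erase x0) ?_ (fun x => w x - (w x0 / y x0) * y x) ?_ ?_
    · rw [card_erase_of_mem hx0C, card_erase_of_mem hl0, hC]; simp
    · intro x hx
      by_cases hxx : x = x0
      · subst hxx; field_simp; ring
      · have : x ∉ C.erase l0 := fun h => hx (mem_erase.2 ⟨hxx, h⟩)
        rw [wzero x this, hy x this]; ring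
    · simp only [sub_smul, mul_smul, sum_sub_distrib, ← Finset.smul_sum, hs, wsum, smul_zero, sub_zero]
  obtain ⟨y, ysupp, ysum, yl0⟩ : ∃ y : X → ℝ, (∀ x, x ∉ C → y x = 0) ∧ ∑ x, y x • v x = 0 ∧
      y l0 = 1 := by
    have hnl : ¬ LinearIndependent ℝ (fun x : C => v x) := by
      intro h
      have := h.fintype_card_le_finrank
      simp [hC] at this
    rw [Fintype.not_linearIndependent_iff] at hnl
    obtain ⟨y0, hy0, i, hi⟩ := hnl
    let y : X → ℝ := fun x => if h : x ∈ C then y0 ⟨x, h⟩ else 0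
    have ys : ∑ x, y x • v x = 0 := by
      rw [← hy0, ← Finset.sum_subset (Finset.subset_univ C), ← Finset.sum_coe_sort]
      · apply Finset.sum_congr rfl
        intro x _; simp [y]
      · intro x _ hx; simp [y, hx]
    have hyne : y l0 ≠ 0 := by
      intro h
      have := indep y (by
        intro x hx
        by_cases hxx : x = l0
        · rw [hxx, h]
        · have : x ∉ C := fun h' => hx (mem_erase.2 ⟨hxx, h'⟩)
          simp [y, this]) ys
      apply hi
      have h2 := congrFun this i.1
      simpa [y] using h2
    refine ⟨fun x => (y l0)⁻¹ * y x, ?_, ?_, ?_⟩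
    · intro x hx; simp [y, hx]
    · simp only [mul_smul, ← Finset.smul_sum, ys, smul_zero]
    · field_simp
  have wl0 : w l0 = 0 := wzero _ (by simp)
  have uniq : ∀ z : X → ℝ, (∀ x, x ∉ C → z x = 0) → ∑ x, z x • v x = b →
      ∀ x, z x = w x + z l0 * y x := by
    intro z hz hs
    have := indep (fun x => z x - w x - z l0 * y x) (by
      intro x hx
      by_cases hxx : x = l0
      · subst hxx; rw [yl0, wl0]; ring
      · have h3 : x ∉ C := fun h' => hx (mem_erase.2 ⟨hxx, h'⟩)
        rw [hz x h3, wzero x hx, ysupp x h3]; ring) (by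
      simp only [sub_smul, mul_smul, sum_sub_distrib, ← Finset.smul_sum, ysum, hs, wsum, smul_zero,
        sub_self, sub_zero])
    intro x
    have h2 := congrFun this x
    simp only [Pi.zero_apply] at h2
    linarith
  -- a negative coordinate
  obtain ⟨k0, hk0⟩ : ∃ k0, y k0 < 0 := by
    by_contra h
    push Not at h
    have h1 : ∑ x, y x * ∑ i, v x i = 0 := by
      have : ∑ x, y x * ∑ i, v x i = ∑ i, (∑ x, y x • v x) i := by
        simp only [Finset.sum_apply, Pi.smul_apply, smul_eq_mul, Finset.mul_sum]
        rw [Finset.sum_comm]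
      rw [this, ysum]; simp
    have h2 := (Finset.sum_eq_zero_iff_of_nonneg (fun x _ => mul_nonneg (h x) (hpos x).le)).1 h1 l0
      (mem_univ _)
    rw [yl0, one_mul] at h2
    exact (hpos l0).ne' h2
  obtain ⟨l1, hl1, hmin⟩ := Finset.exists_min_image (univ.filter (fun x => y x < 0))
    (fun x => w x / (- y x)) ⟨k0, by simpa using hk0⟩
  simp only [mem_filter, mem_univ, true_and] at hl1 hmin
  have hl1C : l1 ∈ C := by by_contra h; rw [ysupp _ h] at hl1; exact lt_irrefl _ hl1
  have hl10 : l1 ≠ l0 := by intro h; rw [h, yl0] at hl1; linarith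
  set t := w l1 / (- y l1) with ht
  have wl1 : 0 < w l1 := wpos _ (mem_erase.2 ⟨hl10, hl1C⟩)
  have tpos : 0 < t := div_pos wl1 (by linarith)
  have hset : {l ∈ C | Feas v b (C.erase l)} = {l0, l1} := by
    ext l
    simp only [mem_filter, mem_insert, mem_singleton]
    constructor
    · rintro ⟨hlC, z, zpos, zzero, zsum⟩
      by_cases hl0' : l = l0
      · exact Or.inl hl0'
      right
      by_contra hl1'
      have hz := uniq z (fun x hx => zzero x (fun h => hx (mem_of_mem_erase h))) zsum
      have h1 : 0 < z l0 := zpos _ (mem_erase.2 ⟨fun h => hl0' h.symm, hl0⟩)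
      have h2 : 0 < z l1 := zpos _ (mem_erase.2 ⟨fun h => hl1' h.symm, hl1C⟩)
      have h3 : z l = 0 := zzero _ (by simp)
      have h4 : 0 < w l := wpos _ (mem_erase.2 ⟨hl0', hlC⟩)
      rw [hz] at h2 h3
      have h5 : y l < 0 := by
        by_contra hh; push Not at hh
        have := mul_nonneg h1.le hh
        linarith
      have h6 := hmin l h5
      have h7 : w l / (- y l) = z l0 := by
        rw [div_eq_iff (by linarith)]; linarith
      have h8 : z l0 < t := by
        rw [ht, lt_div_iff₀ (by linarith)]; linarith
      linarith
    · rintro (rfl | rfl)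
      · exact ⟨hl0, w, wpos, wzero, wsum⟩
      · refine ⟨hl1C, fun x => w x + t * y x, ?_, ?_, ?_⟩
        · intro x hx
          have hxC := mem_of_mem_erase hx
          have hne : x ≠ l := (mem_erase.1 hx).1
          have hnn : 0 ≤ w x + t * y x := by
            have hw : 0 ≤ w x := by
              by_cases h : x ∈ C.erase l0
              · exact (wpos x h).le
              · exact (wzero x h).ge
            by_cases h : y x < 0
            · have := hmin x h
              rw [le_div_iff₀ (by linarith)] at this
              linarith
            · push Not at h
              have := mul_nonneg tpos.le h
              linarith
          refine lt_of_le_of_ne hnn fun heq => ?_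
          refine hgen ((C.erase l).erase x) ?_ (fun x => w x + t * y x) ?_ ?_
          · rw [card_erase_of_mem hx, card_erase_of_mem hl1C, hC]; simp
          · intro u hu
            by_cases hux : u = x
            · subst hux; exact heq.symm
            by_cases hul : u = l
            · subst hul; rw [ht]; have : y u ≠ 0 := hl1.ne
              field_simp; ring
            have : u ∉ C := fun h => hu (mem_erase.2 ⟨hux, mem_erase.2 ⟨hul, h⟩⟩)
            rw [ysupp u this, wzero u (fun h => this (mem_of_mem_erase h))]; ring
          · simp only [add_smul, mul_smul, sum_add_distrib, ← Finset.smul_sum, ysum, wsum, smul_zero,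
              add_zero]
        · intro u hu
          by_cases hul : u = l
          · subst hul; rw [ht]; have : y u ≠ 0 := hl1.ne
            field_simp; ring
          have : u ∉ C := fun h => hu (mem_erase.2 ⟨hul, h⟩)
          show w u + t * y u = 0
          rw [ysupp u this, wzero u (fun h => this (mem_of_mem_erase h))]; ring
        · simp only [add_smul, mul_smul, sum_add_distrib, ← Finset.smul_sum, ysum, wsum, smul_zero,
              add_zero]
  rw [hset, Finset.card_pair hl10.symm]
  exact even_two

/-- A generic vector near the all-ones vector. -/
theorem exists_generic {X : Type*} [Fintype X] {n : ℕ} (v : X → Fin (n+1) → ℝ) :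
    ∃ b : Fin (n+1) → ℝ, (∀ i, 4/5 ≤ b i ∧ b i ≤ 6/5) ∧
    ∀ E : Finset X, E.card ≤ n → ∀ w : X → ℝ, (∀ x, x ∉ E → w x = 0) →
      ∑ x, w x • v x ≠ b := by
  classical
  let W : Finset X → Submodule ℝ (Fin (n+1) → ℝ) := fun E =>
    Submodule.span ℝ ((E.image v : Finset _) : Set (Fin (n+1) → ℝ))
  let S : Finset (Finset X) := univ.filter (fun E => E.card ≤ n)
  have hW : ∀ E ∈ S, W E ≠ ⊤ := by
    intro E hE h
    have h1 := finrank_span_finset_le_card (R := ℝ) (E.image v)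
    unfold Set.finrank at h1
    rw [show Submodule.span ℝ ((E.image v : Finset _) : Set (Fin (n+1) → ℝ)) = ⊤ from h] at h1
    have h2 : (E.image v).card ≤ E.card := card_image_le
    simp only [S, mem_filter, mem_univ, true_and] at hE
    have h3 : Module.finrank ℝ (⊤ : Submodule ℝ (Fin (n+1) → ℝ)) = n + 1 := by simp
    omega
  have hmem : ∀ E : Finset X, ∀ w : X → ℝ, (∀ x, x ∉ E → w x = 0) → ∑ x, w x • v x ∈ W E := by
    intro E w hw
    apply Submodule.sum_mem
    intro x _
    by_cases hx : x ∈ E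
    · apply Submodule.smul_mem
      apply Submodule.subset_span
      simp only [coe_image, Set.mem_image, mem_coe]
      exact ⟨x, hx, rfl⟩
    · rw [hw x hx, zero_smul]; exact Submodule.zero_mem _
  have hc : ∃ c : Fin (n+1) → ℝ, ∀ E ∈ S, c ∉ W E := by
    have := Subspace.biUnion_ne_univ_of_top_notMem (k := ℝ) (s := S.image W) (by
      intro h
      rw [mem_image] at h
      obtain ⟨E, hE, hh⟩ := h
      exact hW E hE hh)
    rw [Set.ne_univ_iff_exists_notMem] at this
    obtain ⟨c, hc⟩ := this
    refine ⟨c, fun E hE h => hc ?_⟩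
    simp only [Set.mem_iUnion]
    exact ⟨W E, mem_image_of_mem _ hE, h⟩
  obtain ⟨c, hc⟩ := hc
  let u : Fin (n+1) → ℝ := fun _ => 1
  have hfin : ∀ E ∈ S, Set.Finite {t : ℝ | t ≠ 0 ∧ u + t • c ∈ W E} := by
    intro E hE
    apply Set.Subsingleton.finite
    rintro s ⟨hs0, hs⟩ t ⟨ht0, ht⟩
    by_contra hst
    apply hc E hE
    have h1 : (s - t) • c ∈ W E := by
      have := Submodule.sub_mem _ hs ht
      convert this using 1
      rw [sub_smul]; abel
    have h2 := Submodule.smul_mem (W E) (s - t)⁻¹ h1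
    rwa [smul_smul, inv_mul_cancel₀ (sub_ne_zero.2 hst), one_smul] at h2
  let B : ℝ := 1 + ∑ i, |c i|
  have hB : 0 < B := by
    have : 0 ≤ ∑ i, |c i| := sum_nonneg (fun i _ => abs_nonneg _)
    simp only [B]; linarith
  have hbad : Set.Finite (⋃ E ∈ S, {t : ℝ | t ≠ 0 ∧ u + t • c ∈ W E}) :=
    Set.Finite.biUnion S.finite_toSet hfin
  have hinf : (Set.Ioo (0:ℝ) (1/(5*B))).Infinite := Set.Ioo_infinite (by positivity)
  obtain ⟨t, ht, htb⟩ := (hinf.sdiff hbad).nonempty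
  refine ⟨u + t • c, ?_, ?_⟩
  · intro i
    have h1 : |c i| ≤ B := by
      have := Finset.single_le_sum (f := fun i => |c i|) (fun i _ => abs_nonneg _) (mem_univ i)
      simp only [B]; linarith
    have h2 : |t * c i| ≤ 1/5 := by
      rw [abs_mul, abs_of_pos ht.1]
      calc t * |c i| ≤ 1/(5*B) * B := mul_le_mul ht.2.le h1 (abs_nonneg _) (by positivity)
        _ = 1/5 := by field_simp
    have h3 := abs_le.1 h2
    simp only [u, Pi.add_apply, Pi.smul_apply, smul_eq_mul]
    constructor <;> linarith [h3.1, h3.2]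
  · intro E hE w hw heq
    apply htb
    simp only [Set.mem_iUnion]
    refine ⟨E, by simp [S, hE], ht.1.ne', ?_⟩
    rw [← heq]
    exact hmem E w hw
end DInt
namespace DInt
open Finset

/-- Scarf type lemma. -/
theorem scarf {K : Type*} [Fintype K] [DecidableEq K] [Nonempty K] {n : ℕ}
    (c : Fin (n+1) → K → ℕ) (hc : ∀ i, Function.Injective (c i))
    (σ : K → Finset (Fin (n+1))) (hσ : ∀ k, (σ k).Nonempty) :
    ∃ (J : Finset K) (R : Finset (Fin (n+1))) (w : K → ℝ) (s : Fin (n+1) → ℝ),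
      Dom c J R ∧ R.Nonempty ∧ (∀ k, 0 ≤ w k) ∧ (∀ k, k ∉ J → w k = 0) ∧ (∀ i ∈ R, s i = 0) ∧
      (∀ i, (∑ k, if i ∈ σ k then w k else 0) + s i ∈ Set.Icc (4/5 : ℝ) (6/5)) := by
  classical
  let v : K ⊕ Fin (n+1) → Fin (n+1) → ℝ :=
    Sum.elim (fun k i => if i ∈ σ k then 1 else 0) (fun j i => if i = j then 1 else 0)
  obtain ⟨b, hb, hgen⟩ := exists_generic v
  have hpos : ∀ x, 0 < ∑ i, v x i := by
    rintro (k | j)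
    · simp only [v, Sum.elim_inl]
      rw [Finset.sum_boole]
      have := (hσ k).card_pos
      have h2 : ({i | i ∈ σ k} : Finset (Fin (n+1))) = σ k := by ext; simp
      rw [h2]; exact_mod_cast this
    · simp [v]
  have hev := parity_pairing n (Sum.inr 0) (OProp c) (Feas v b)
    (fun E hE => dom_cycle c hc E hE) (fun C hC => lp_cocycle v b hpos hgen C hC)
  let D0 : Finset (K ⊕ Fin (n+1)) := univ.map Function.Embedding.inr
  have hD0 : D0 ∈ ({D ∈ powersetCard (n+1) (univ : Finset (K ⊕ Fin (n+1))) |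
      OProp c D ∧ Feas v b D} : Finset _) := by
    rw [mem_filter, mem_powersetCard]
    refine ⟨⟨subset_univ _, by simp [D0]⟩, Or.inr rfl, Sum.elim (fun _ => 0) b, ?_, ?_, ?_⟩
    · rintro (k | j) h
      · simp [D0] at h
      · have := (hb j).1
        simp only [Sum.elim_inr]; linarith
    · rintro (k | j) h
      · rfl
      · simp [D0] at h
    · ext i
      simp [v]
  have hone : 1 < #({D ∈ powersetCard (n+1) (univ : Finset (K ⊕ Fin (n+1))) |
      OProp c D ∧ Feas v b D} : Finset _) := by
    have h1 := card_pos.2 ⟨D0, hD0⟩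
    rcases hev with ⟨r, hr⟩
    omega
  obtain ⟨D, hD, hne⟩ := exists_mem_ne hone D0
  rw [mem_filter, mem_powersetCard] at hD
  obtain ⟨⟨-, hcard⟩, hO, w, wpos, wzero, wsum⟩ := hD
  have hdom : Dom c D.toLeft (D.toRight)ᶜ := hO.resolve_right hne
  refine ⟨D.toLeft, (D.toRight)ᶜ, fun k => w (Sum.inl k), fun i => w (Sum.inr i), hdom, ?_, ?_, ?_,
    ?_, ?_⟩
  · obtain ⟨i, hi, -⟩ := hdom (Classical.arbitrary K)
    exact ⟨i, hi⟩
  · intro k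
    by_cases h : Sum.inl k ∈ D
    · exact (wpos _ h).le
    · exact (wzero _ h).ge
  · intro k hk
    exact wzero _ (by simpa using hk)
  · intro i hi
    exact wzero _ (by simpa using hi)
  · intro i
    have h1 := congrFun wsum i
    have h2 : (∑ x, w x • v x) i = (∑ k, if i ∈ σ k then w (Sum.inl k) else 0) + w (Sum.inr i) := by
      simp [v]
    rw [← h2, h1]
    exact hb i

/-- A large matching from a fractional perfect matching in a graph (with loops). -/
theorem frac_to_matching {K V : Type*} [Fintype K] [DecidableEq K] [Fintype V] [DecidableEq V]
    (J : Finset K) (σ : K → Finset V) (w : K → ℝ) (h1 : ∀ k ∈ J, (σ k).Nonempty)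
    (h2 : ∀ k ∈ J, (σ k).card ≤ 2) (w0 : ∀ k, 0 ≤ w k) (wJ : ∀ k, k ∉ J → w k = 0)
    (hb : ∀ i, (∑ k, if i ∈ σ k then w k else 0) ∈ Set.Icc (4/5 : ℝ) (6/5)) :
    ∃ M ⊆ J, (M : Set K).PairwiseDisjoint σ ∧ (Fintype.card V : ℝ) ≤ 7/2 * M.card := by
  classical
  obtain ⟨M, hM, hmax⟩ := exists_max_image
    (J.powerset.filter (fun M : Finset K => (M : Set K).PairwiseDisjoint σ)) card ⟨∅, by simp⟩
  simp only [mem_filter, mem_powerset] at hM hmax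
  obtain ⟨hMJ, hMd⟩ := hM
  refine ⟨M, hMJ, hMd, ?_⟩
  set A : Finset V := M.biUnion σ with hA
  have hAcard : A.card ≤ 2 * M.card := by
    calc A.card ≤ ∑ k ∈ M, (σ k).card := card_biUnion_le
      _ ≤ ∑ k ∈ M, 2 := sum_le_sum (fun k hk => h2 k (hMJ hk))
      _ = 2 * M.card := by simp [mul_comm]
  let U : Finset V := Aᶜ
  have memU : ∀ u, u ∈ U ↔ ∀ k ∈ M, u ∉ σ k := by intro u; simp [U, hA]
  -- edges meeting U meet A
  have hmeet : ∀ k ∈ J, (∃ u ∈ U, u ∈ σ k) → ∃ k' ∈ M, ∃ a ∈ σ k', a ∈ σ k := by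
    intro k hk ⟨u, hu, huk⟩
    by_contra hcon
    push Not at hcon
    have hkM : k ∉ M := fun h => (memU u).1 hu k h huk
    have := hmax (insert k M) ⟨insert_subset hk hMJ, by
      rw [coe_insert]
      apply Set.PairwiseDisjoint.insert hMd
      intro j hj _
      rw [Finset.disjoint_right]
      intro a ha
      exact hcon j hj a ha⟩
    rw [card_insert_of_notMem hkM] at this
    omega
  -- structure: σ k = {u, a}
  have hpair : ∀ k ∈ J, ∀ u ∈ U, u ∈ σ k → ∀ a ∈ A, a ∈ σ k → σ k = {u, a} := by
    intro k hk u hu huk a ha hak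
    have hne : u ≠ a := by rintro rfl; simp [U] at hu; exact hu ha
    symm
    apply eq_of_subset_of_card_le
    · intro x hx
      rcases mem_insert.1 hx with rfl | hx
      · exact huk
      · rw [mem_singleton.1 hx]; exact hak
    · rw [card_pair hne]; exact h2 k hk
  let T : K → Finset K := fun k' => J.filter (fun k => ∃ u ∈ U, ∃ a ∈ σ k', σ k = {u, a})
  have hTsum : ∀ k' ∈ M, ∑ k ∈ T k', w k ≤ 6/5 := by
    intro k' hk'
    have hsub : ∀ z, (∀ k ∈ T k', z ∈ σ k) → ∑ k ∈ T k', w k ≤ 6/5 := by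
      intro z hz
      refine le_trans ?_ (hb z).2
      rw [← sum_filter]
      apply sum_le_sum_of_subset_of_nonneg
      · intro k hk; simp only [mem_filter, mem_univ, true_and]; exact hz k hk
      · intro k _ _; exact w0 k
    -- pairwise intersecting
    have hint : ∀ k1 ∈ T k', ∀ k2 ∈ T k', ∃ z, z ∈ σ k1 ∧ z ∈ σ k2 := by
      intro k1 hk1 k2 hk2
      by_contra hcon
      push Not at hcon
      simp only [T, mem_filter] at hk1 hk2
      obtain ⟨hk1J, u1, hu1, a1, ha1, hs1⟩ := hk1
      obtain ⟨hk2J, u2, hu2, a2, ha2, hs2⟩ := hk2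
      have hn1 : k1 ∉ M := fun h => (memU u1).1 hu1 k1 h (by rw [hs1]; simp)
      have hn2 : k2 ∉ M := fun h => (memU u2).1 hu2 k2 h (by rw [hs2]; simp)
      have hn12 : k1 ≠ k2 := by
        rintro rfl
        exact hcon u1 (by rw [hs1]; simp) (by rw [hs1]; simp)
      have hdj : ∀ k, (∃ u ∈ U, ∃ a ∈ σ k', σ k = {u, a}) → ∀ j ∈ M.erase k',
          Disjoint (σ k) (σ j) := by
        rintro k ⟨u, hu, a, ha, hs⟩ j hj
        have hj' := mem_erase.1 hj
        rw [hs, Finset.disjoint_left]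
        intro x hx hxj
        rcases mem_insert.1 hx with rfl | hx
        · exact (memU x).1 hu j hj'.2 hxj
        · rw [mem_singleton.1 hx] at hxj
          exact Finset.disjoint_left.1 (hMd hj'.2 hk' hj'.1) hxj ha
      have := hmax (insert k1 (insert k2 (M.erase k'))) ⟨by
          apply insert_subset hk1J
          apply insert_subset hk2J
          exact (erase_subset _ _).trans hMJ, by
          rw [coe_insert, coe_insert]
          apply Set.PairwiseDisjoint.insert
          · apply Set.PairwiseDisjoint.insert
            · exact hMd.subset (by simpa using erase_subset k' M)
            · intro j hj _
              exact hdj k2 ⟨u2, hu2, a2, ha2, hs2⟩ j hj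
          · intro j hj _
            rcases hj with rfl | hj
            · rw [Finset.disjoint_left]; exact hcon
            · exact hdj k1 ⟨u1, hu1, a1, ha1, hs1⟩ j hj⟩
      rw [card_insert_of_notMem (by simp [hn12, hn1]), card_insert_of_notMem (by simp [hn2]),
        card_erase_of_mem hk'] at this
      have := card_pos.2 ⟨k', hk'⟩
      omega
    by_cases hTe : T k' = ∅
    · rw [hTe]; norm_num
    obtain ⟨k1, hk1⟩ := nonempty_iff_ne_empty.2 hTe
    obtain ⟨hk1J, u1, hu1, a1, ha1, hs1⟩ := mem_filter.1 hk1
    by_cases hall : ∀ k ∈ T k', u1 ∈ σ k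
    · exact hsub u1 hall
    push Not at hall
    obtain ⟨k2, hk2, hu12⟩ := hall
    obtain ⟨hk2J, u2, hu2, a2, ha2, hs2⟩ := mem_filter.1 hk2
    have hAU : ∀ u ∈ U, ∀ a ∈ σ k', u ≠ a := by
      rintro u hu a ha rfl
      exact (memU u).1 hu k' hk' ha
    have e12 : a1 = a2 := by
      obtain ⟨z, hz1, hz2⟩ := hint k1 hk1 k2 hk2
      rw [hs2] at hu12 
      rw [hs1] at hz1
      rw [hs2] at hz2
      have := hAU u2 hu2 a1 ha1
      have := hAU u1 hu1 a2 ha2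
      simp only [mem_insert, mem_singleton] at hz1 hz2 hu12
      grind
    apply hsub a1
    intro k3 hk3
    obtain ⟨hk3J, u3, hu3, a3, ha3, hs3⟩ := mem_filter.1 hk3
    by_contra hn
    obtain ⟨z, hz1, hz2⟩ := hint k1 hk1 k3 hk3
    obtain ⟨z', hz1', hz2'⟩ := hint k2 hk2 k3 hk3
    rw [hs3] at hn hz2 hz2'
    rw [hs1] at hz1
    rw [hs2] at hz1' hu12
    have := hAU u1 hu1 a3 ha3
    have := hAU u2 hu2 a3 ha3
    simp only [mem_insert, mem_singleton] at hz1 hz2 hu12 hn hz1' hz2'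
    grind
  have hU1 : (U.card : ℝ) * (4/5) ≤ M.card * (6/5) := by
    calc (U.card : ℝ) * (4/5) = ∑ u ∈ U, (4/5 : ℝ) := by simp
      _ ≤ ∑ u ∈ U, ∑ k, (if u ∈ σ k then w k else 0) := sum_le_sum (fun u _ => (hb u).1)
      _ = ∑ k, ∑ u ∈ U, (if u ∈ σ k then w k else 0) := sum_comm
      _ ≤ ∑ k, ∑ k' ∈ M, (if k ∈ T k' then w k else 0) := by
        apply sum_le_sum
        intro k _
        have hnn : 0 ≤ ∑ k' ∈ M, (if k ∈ T k' then w k else 0) :=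
          sum_nonneg (fun k' _ => by split_ifs <;> simp [w0])
        by_cases hkJ : k ∈ J
        swap
        · simp [wJ k hkJ]
        by_cases hex : ∃ u ∈ U, u ∈ σ k
        swap
        · push Not at hex
          rw [sum_eq_zero (fun u hu => by simp [hex u hu])]
          exact hnn
        obtain ⟨u, hu, huk⟩ := hex
        obtain ⟨k', hk', a, ha, hak⟩ := hmeet k hkJ ⟨u, hu, huk⟩
        have haA : a ∈ A := mem_biUnion.2 ⟨k', hk', ha⟩
        have hs := hpair k hkJ u hu huk a haA hak
        have hkT : k ∈ T k' := mem_filter.2 ⟨hkJ, u, hu, a, ha, hs⟩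
        have hl : ∑ u ∈ U, (if u ∈ σ k then w k else 0) = w k := by
          rw [sum_eq_single_of_mem u hu]
          · simp [huk]
          · intro u' hu' hne
            rw [if_neg]
            rw [hs]
            simp only [mem_insert, mem_singleton, hne, false_or]
            rintro rfl
            simp [U] at hu'; exact hu' haA
        rw [hl]
        calc w k = (if k ∈ T k' then w k else 0) := by simp [hkT]
          _ ≤ _ := single_le_sum (f := fun k' => if k ∈ T k' then w k else 0)
            (fun k' _ => by split_ifs <;> simp [w0]) hk'
      _ = ∑ k' ∈ M, ∑ k ∈ T k', w k := by
        rw [sum_comm]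
        apply sum_congr rfl
        intro k' _
        rw [← sum_filter]
        apply sum_congr _ (fun _ _ => rfl)
        ext; simp
      _ ≤ ∑ k' ∈ M, (6/5 : ℝ) := sum_le_sum hTsum
      _ = _ := by simp
  have hUA : A.card + U.card = Fintype.card V := card_add_card_compl A
  have : (A.card : ℝ) ≤ 2 * M.card := by exact_mod_cast hAcard
  rw [← hUA]; push_cast
  linarith
end DInt
namespace DInt
open Finset

theorem exists_le_sum_eq {V : Type*} [Fintype V] [DecidableEq V] (u : V → ℕ) (N : ℕ)
    (h : N ≤ ∑ i, u i) : ∃ y : V → ℕ, (∀ i, y i ≤ u i) ∧ ∑ i, y i = N := by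
  induction N with
  | zero => exact ⟨fun _ => 0, fun _ => Nat.zero_le _, by simp⟩
  | succ N ih =>
    obtain ⟨y, hy, hs⟩ := ih (by omega)
    obtain ⟨i, -, hi⟩ : ∃ i ∈ univ, y i < u i := exists_lt_of_sum_lt (by rw [hs]; omega)
    refine ⟨Function.update y i (y i + 1), ?_, ?_⟩
    · intro j
      by_cases hj : j = i
      · subst hj; simpa using hi
      · simpa [hj] using hy j
    · rw [sum_update_of_mem (mem_univ i)]
      have := add_sum_erase univ y (mem_univ i)
      rw [← erase_eq]
      omega

/-- Partial sums. -/
def T {n : ℕ} (x : Fin (n+1) → ℕ) (i : ℕ) : ℕ := ∑ l with l.val < i, x l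

theorem T_mono {n : ℕ} (x : Fin (n+1) → ℕ) {i j : ℕ} (h : i ≤ j) : T x i ≤ T x j := by
  apply sum_le_sum_of_subset
  intro l hl
  simp only [mem_filter, mem_univ, true_and] at hl ⊢
  omega

theorem T_zero {n : ℕ} (x : Fin (n+1) → ℕ) : T x 0 = 0 := by simp [T]

theorem T_last {n : ℕ} (x : Fin (n+1) → ℕ) : T x (n+1) = ∑ l, x l := by
  unfold T
  congr 1
  ext l
  have := l.isLt
  simp
  omega

theorem T_succ {n : ℕ} (x : Fin (n+1) → ℕ) (i : Fin (n+1)) : T x (i.val+1) = T x i.val + x i := by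
  unfold T
  have : ({l | l.val < i.val + 1} : Finset (Fin (n+1))) = insert i ({l | l.val < i.val} : Finset _) := by
    ext l
    simp only [mem_filter, mem_univ, true_and, mem_insert, Fin.ext_iff]
    omega
  rw [this, sum_insert (by simp)]
  omega

theorem T_piece {n : ℕ} (x : Fin (n+1) → ℕ) (t : ℕ) (ht : t < ∑ l, x l) :
    ∃ i : Fin (n+1), T x i.val ≤ t ∧ t < T x (i.val+1) := by
  classical
  have hex : ∃ i, t < T x i := ⟨n+1, by rwa [T_last]⟩
  have h1 := Nat.find_spec hex
  have h2 : Nat.find hex ≤ n + 1 := Nat.find_min' hex (by rwa [T_last])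
  have h3 : Nat.find hex ≠ 0 := by intro h; rw [h, T_zero] at h1; omega
  refine ⟨⟨Nat.find hex - 1, by omega⟩, ?_, ?_⟩
  · have := Nat.find_min hex (m := Nat.find hex - 1) (by omega)
    simpa using this
  · have : Nat.find hex - 1 + 1 = Nat.find hex := by omega
    simp only [this]; exact h1

theorem T_diff {n N : ℕ} (x y V : Fin (n+1) → ℕ) (hx : ∀ i, x i ≤ V i) (hy : ∀ i, y i ≤ V i)
    (hys : ∑ i, y i = N) (hV : ∑ i, V i ≤ N + n) (i : ℕ) : T x i ≤ T y i + n := by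
  have h1 : T x i ≤ T V i := sum_le_sum (fun l _ => hx l)
  have h2 := sum_filter_add_sum_filter_not univ (fun l : Fin (n+1) => l.val < i) y
  have h3 := sum_filter_add_sum_filter_not univ (fun l : Fin (n+1) => l.val < i) V
  have h4 : ∑ l with ¬ (l.val < i), y l ≤ ∑ l with ¬ (l.val < i), V l := sum_le_sum (fun l _ => hy l)
  unfold T at *
  omega

theorem discrete_two {ι : Type*} (q n : ℕ) (comp : ι → Fin 2 → Set ℕ)
    (hconn : ∀ e r, (comp e r).OrdConnected) (hlt : ∀ e r, ∀ a ∈ comp e r, a < q)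
    (hne : ∀ e, ∃ r a, a ∈ comp e r)
    (hcov : ∀ C : Finset ℕ, C.card ≤ n → ∃ e, ∀ a ∈ C, ∀ r, a ∉ comp e r) :
    ∃ M : Finset ι, (∀ e ∈ M, ∀ f ∈ M, e ≠ f → ∀ a r r', a ∈ comp e r → a ∉ comp f r') ∧
      ((n : ℝ) + 1) ≤ 7/2 * M.card := by
  classical
  set s := n + 1 with hs
  set N := q * s with hN
  let K := ↥(Finset.piAntidiag (univ : Finset (Fin (n+1))) N)
  have hKsum : ∀ x : K, ∑ i, x.1 i = N := fun x => (mem_piAntidiag.1 x.2).1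
  have mk : ∀ y : Fin (n+1) → ℕ, ∑ i, y i = N → ∃ x : K, x.1 = y := fun y hy =>
    ⟨⟨y, mem_piAntidiag.2 ⟨hy, fun _ _ => mem_univ _⟩⟩, rfl⟩
  have : Nonempty K := by
    obtain ⟨x, -⟩ := mk (Pi.single 0 N) (by simp)
    exact ⟨x⟩
  have hce : ∀ x : K, ∃ e, ∀ i : Fin n, ∀ r, T x.1 (i.val+1) / s ∉ comp e r := by
    intro x
    obtain ⟨e, he⟩ := hcov (univ.image (fun i : Fin n => T x.1 (i.val+1) / s))
      (card_image_le.trans (by simp))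
    exact ⟨e, fun i r => he _ (mem_image_of_mem _ (mem_univ _)) r⟩
  choose e he using hce
  let σ : K → Finset (Fin (n+1)) := fun x => univ.filter (fun i =>
    ∃ t r, T x.1 i.val ≤ t ∧ t < T x.1 (i.val+1) ∧ t / s ∈ comp (e x) r)
  have memσ : ∀ x i, i ∈ σ x ↔
      ∃ t r, T x.1 i.val ≤ t ∧ t < T x.1 (i.val+1) ∧ t / s ∈ comp (e x) r := by
    intro x i; simp only [σ, mem_filter, mem_univ, true_and]
  have hs0 : 0 < s := by omega
  have block : ∀ x : K, ∀ a r, a ∈ comp (e x) r → ∃ i ∈ σ x, T x.1 i.val ≤ a * s ∧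
      a * s + s ≤ T x.1 (i.val+1) := by
    intro x a r ha
    have haq := hlt _ _ _ ha
    have haN : a * s + s ≤ N := by
      rw [hN]; calc a * s + s = (a+1) * s := by ring
        _ ≤ q * s := Nat.mul_le_mul_right _ haq
    obtain ⟨i, hi1, hi2⟩ := T_piece x.1 (a * s) (by rw [hKsum]; omega)
    refine ⟨i, (memσ x i).2 ⟨a * s, r, hi1, hi2, by rwa [Nat.mul_div_cancel _ hs0]⟩, hi1, ?_⟩
    by_contra hcon
    push Not at hcon
    by_cases hin : i.val = n
    · rw [hin, T_last, hKsum] at hcon; omega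
    · have hd : T x.1 (i.val+1) / s = a := by
        rw [Nat.div_eq_iff hs0]
        constructor
        · linarith
        · have : a * s + s - 1 = s - 1 + a * s := by omega
          omega
      exact he x ⟨i.val, by omega⟩ r (by simp only [hd]; exact ha)
  have hσne : ∀ x, (σ x).Nonempty := by
    intro x
    obtain ⟨r, a, ha⟩ := hne (e x)
    obtain ⟨i, hi, -⟩ := block x a r ha
    exact ⟨i, hi⟩
  have hσ0 : ∀ x : K, ∀ i, x.1 i = 0 → i ∉ σ x := by
    intro x i hi h
    obtain ⟨t, r, h1, h2, -⟩ := (memσ x i).1 h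
    rw [T_succ, hi] at h2
    omega
  have hσ2 : ∀ x, (σ x).card ≤ 2 := by
    intro x
    have hch : ∀ i : Fin (n+1), ∃ r : Fin 2, i ∈ σ x →
        ∃ t, T x.1 i.val ≤ t ∧ t < T x.1 (i.val+1) ∧ t / s ∈ comp (e x) r := by
      intro i
      by_cases h : i ∈ σ x
      · obtain ⟨t, r, h'⟩ := (memσ x i).1 h
        exact ⟨r, fun _ => ⟨t, h'⟩⟩
      · exact ⟨0, fun h' => absurd h' h⟩
    choose ρ hρ using hch
    have key : ∀ i ∈ σ x, ∀ j ∈ σ x, i < j → ρ i ≠ ρ j := by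
      intro i hi j hj hij heq
      obtain ⟨t, h1, h2, h3⟩ := hρ i hi
      obtain ⟨t', h1', h2', h3'⟩ := hρ j hj
      have hij' : i.val < j.val := hij
      have hm := T_mono x.1 (show i.val + 1 ≤ j.val by omega)
      rw [heq] at h3
      have hmem : T x.1 j.val / s ∈ comp (e x) (ρ j) :=
        (hconn (e x) (ρ j)).out h3 h3' ⟨Nat.div_le_div_right (by omega), Nat.div_le_div_right h1'⟩
      have hj1 : j.val - 1 + 1 = j.val := by omega
      refine he x ⟨j.val - 1, by omega⟩ (ρ j) ?_
      simp only [hj1]; exact hmem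
    have := card_le_card_of_injOn (s := σ x) (t := (univ : Finset (Fin 2))) ρ
      (fun i _ => mem_coe.2 (mem_univ _)) (by
        intro i hi j hj heq
        rcases lt_trichotomy i j with h | h | h
        · exact absurd heq (key i hi j hj h)
        · exact h
        · exact absurd heq.symm (key j hj i hi h))
    simpa using this
  let cK := Fintype.card K
  let enc : K ≃ Fin cK := Fintype.equivFin K
  let c : Fin (n+1) → K → ℕ := fun i x => x.1 i * cK + (enc x).val
  have hcle : ∀ i x y, c i x ≤ c i y → x.1 i ≤ y.1 i := by
    intro i x y h
    by_contra hcon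
    push Not at hcon
    have h1 : (y.1 i + 1) * cK ≤ x.1 i * cK := Nat.mul_le_mul_right _ hcon
    have h2 := (enc y).isLt
    simp only [c] at h
    rw [add_mul] at h1
    omega
  have hcinj : ∀ i, Function.Injective (c i) := by
    intro i x y h
    have h1 := le_antisymm (hcle i x y h.le) (hcle i y x h.ge)
    simp only [c] at h
    rw [h1] at h
    exact enc.injective (Fin.ext (by omega))
  obtain ⟨J, R, w, sl, hdom, hRne, w0, wJ, hsl, hb⟩ := scarf c hcinj σ hσne
  have hnz : ∀ i ∈ R, ∃ x ∈ J, x.1 i ≠ 0 := by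
    intro i hi
    by_contra hcon
    push Not at hcon
    have h1 : (∑ k, if i ∈ σ k then w k else 0) = 0 := by
      apply sum_eq_zero
      intro k _
      by_cases hk : k ∈ J
      · rw [if_neg (hσ0 k i (hcon k hk))]
      · rw [wJ k hk]; simp
    have h2 := (hb i).1
    rw [h1, hsl i hi] at h2
    norm_num at h2
  have hR : R = univ := by
    rw [eq_univ_iff_forall]
    intro i0
    by_contra hi0
    obtain ⟨x, hx⟩ := mk (Pi.single i0 N) (by simp)
    obtain ⟨i, hi, h⟩ := hdom x
    obtain ⟨y, hy, hy0⟩ := hnz i hi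
    have := hcle i y x (h y hy)
    have hne : i ≠ i0 := by rintro rfl; exact hi0 hi
    rw [hx, Pi.single_eq_of_ne hne] at this
    omega
  subst hR
  have hb' : ∀ i, (∑ k, if i ∈ σ k then w k else 0) ∈ Set.Icc (4/5 : ℝ) (6/5) := by
    intro i
    have := hb i
    rwa [hsl i (mem_univ _), add_zero] at this
  obtain ⟨M, hMJ, hMd, hMc⟩ := frac_to_matching J σ w (fun k _ => hσne k) (fun k _ => hσ2 k) w0 wJ hb'
  let V : Fin (n+1) → ℕ := fun i => J.sup (fun x => x.1 i)
  have hV : ∀ x ∈ J, ∀ i, x.1 i ≤ V i := fun x hx i => le_sup (f := fun x : K => x.1 i) hx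
  have hV1 : ∀ i, 1 ≤ V i := by
    intro i
    obtain ⟨x, hx, h0⟩ := hnz i (mem_univ _)
    have := hV x hx i
    omega
  have hVs : ∑ i, V i ≤ N + n := by
    by_contra hcon
    push Not at hcon
    have h1 : ∑ i, (V i - 1) + (n + 1) = ∑ i, V i := by
      have : ∑ i, V i = ∑ i, ((V i - 1) + 1) := sum_congr rfl (fun i _ => by have := hV1 i; omega)
      rw [this, sum_add_distrib]; simp
    obtain ⟨y, hy, hys⟩ := exists_le_sum_eq (fun i => V i - 1) N (by omega)
    obtain ⟨x, hx⟩ := mk y hys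
    obtain ⟨i, -, h⟩ := hdom x
    have h2 : V i ≤ x.1 i := Finset.sup_le (fun j hj => hcle i j x (h j hj))
    have h3 := hy i
    have h4 := hV1 i
    rw [hx] at h2
    omega
  have hdisj : ∀ x ∈ M, ∀ y ∈ M, x ≠ y → ∀ a r r', a ∈ comp (e x) r → a ∉ comp (e y) r' := by
    intro x hx y hy hxy a r r' ha ha'
    obtain ⟨i, hi, h1, h2⟩ := block x a r ha
    obtain ⟨j, hj, h1', h2'⟩ := block y a r' ha'
    have hij : i ≠ j := by
      rintro rfl
      exact Finset.disjoint_left.1 (hMd hx hy hxy) hi hj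
    have d1 := fun t => T_diff x.1 y.1 V (hV x (hMJ hx)) (hV y (hMJ hy)) (hKsum y) hVs t
    have d2 := fun t => T_diff y.1 x.1 V (hV y (hMJ hy)) (hV x (hMJ hx)) (hKsum x) hVs t
    rcases lt_or_gt_of_ne hij with h | h
    · have hm := T_mono y.1 (show i.val + 1 ≤ j.val from h)
      have := d1 (i.val+1)
      omega
    · have hm := T_mono x.1 (show j.val + 1 ≤ i.val from h)
      have := d2 (j.val+1)
      omega
  have heinj : Set.InjOn e (M : Set K) := by
    intro x hx y hy hxy
    by_contra hne'
    obtain ⟨r, a, ha⟩ := hne (e x)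
    exact hdisj x hx y hy hne' a r r ha (by rw [← hxy]; exact ha)
  refine ⟨M.image e, ?_, ?_⟩
  · intro f hf g hg hfg a r r' ha
    obtain ⟨x, hx, rfl⟩ := mem_image.1 hf
    obtain ⟨y, hy, rfl⟩ := mem_image.1 hg
    exact hdisj x hx y hy (fun h => hfg (by rw [h])) a r r' ha
  · rw [card_image_of_injOn heinj]
    simpa using hMc
end DInt
namespace DInt
open Finset

theorem lp_duality {E P : Type*} [Fintype E] [Fintype P] [DecidableEq E] [DecidableEq P]
    (inc : E → P → Prop) [∀ e p, Decidable (inc e p)] (C : ℝ) (hne : ∀ e, ∃ p, inc e p)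
    (h : ∀ g : E → ℝ, (∀ e, 0 ≤ g e) → (∀ p, (∑ e, if inc e p then g e else 0) ≤ 1) →
      ∑ e, g e ≤ C) :
    ∃ f : P → ℝ, (∀ p, 0 ≤ f p) ∧ (∀ e, 1 ≤ ∑ p, if inc e p then f p else 0) ∧ ∑ p, f p ≤ C := by
  classical
  rcases isEmpty_or_nonempty E with hE | ⟨⟨e0⟩⟩
  · refine ⟨fun _ => 0, fun _ => le_rfl, fun e => hE.elim e, ?_⟩
    have := h (fun _ => 0) (fun _ => le_rfl) (fun p => by simp)
    simpa using this
  have hC : 1 ≤ C := by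
    have := h (Pi.single e0 1) (fun e => by
      by_cases he : e = e0
      · subst he; simp
      · simp [he]) (fun p => by
        calc (∑ e, if inc e p then (Pi.single e0 1 : E → ℝ) e else 0)
            ≤ ∑ e, (Pi.single e0 1 : E → ℝ) e := sum_le_sum (fun e _ => by
              by_cases he : e = e0
              · subst he; split_ifs <;> simp
              · simp [he])
          _ = 1 := by simp
          _ ≤ 1 := le_rfl)
    simpa using this
  have hC0 : 0 < C := by linarith
  let A : (P → ℝ) →ₗ[ℝ] (E → ℝ) :=
    { toFun := fun f e => ∑ p, if inc e p then f p else 0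
      map_add' := by
        intro f g; ext e
        simp only [Pi.add_apply]
        rw [← sum_add_distrib]
        exact sum_congr rfl (fun p _ => by split_ifs <;> simp)
      map_smul' := by
        intro c f; ext e
        simp only [Pi.smul_apply, smul_eq_mul, RingHom.id_apply]
        rw [mul_sum]
        exact sum_congr rfl (fun p _ => by split_ifs <;> simp) }
  have hA : ∀ f e, A f e = ∑ p, if inc e p then f p else 0 := fun _ _ => rfl
  let t : Set (E → ℝ) := {y | ∀ e, 1 / C ≤ y e}
  by_cases hdis : Disjoint (A '' stdSimplex ℝ P) t
  swap
  · rw [Set.not_disjoint_iff] at hdis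
    obtain ⟨_, ⟨f, hf, rfl⟩, hy⟩ := hdis
    refine ⟨fun p => C * f p, fun p => mul_nonneg hC0.le (hf.1 p), fun e => ?_, ?_⟩
    · have h1 := hy e
      rw [hA, div_le_iff₀ hC0, mul_comm, mul_sum] at h1
      refine h1.trans (sum_le_sum fun p _ => ?_)
      split_ifs <;> simp
    · rw [← mul_sum, hf.2, mul_one]
  exfalso
  obtain ⟨φ, u, v, hs, huv, ht⟩ := geometric_hahn_banach_compact_closed
    ((convex_stdSimplex ℝ P).linear_image A)
    ((isCompact_stdSimplex ℝ P).image A.continuous_of_finiteDimensional)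
    (t := t) (by
      intro x hx y hy a b ha hb hab e
      have h1 := hx e
      have h2 := hy e
      simp only [Pi.add_apply, Pi.smul_apply, smul_eq_mul]
      calc 1 / C = a * (1/C) + b * (1/C) := by rw [← add_mul, hab, one_mul]
        _ ≤ _ := by gcongr)
    (by
      have : t = ⋂ e, {y : E → ℝ | 1 / C ≤ y e} := by ext; simp [t]
      rw [this]
      exact isClosed_iInter fun e => isClosed_le continuous_const (continuous_apply e))
    hdis
  let g : E → ℝ := fun e => φ (Pi.single e 1)
  have hφ : ∀ y : E → ℝ, φ y = ∑ e, y e * g e := by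
    intro y
    have hy : y = ∑ e, y e • (Pi.single e 1 : E → ℝ) := by
      ext e'
      simp [Finset.sum_apply, Pi.single_apply]
    conv_lhs => rw [hy]
    simp only [map_sum, map_smul, smul_eq_mul, g]
  have hsum : v < (∑ e, g e) / C := by
    have := ht (fun _ => 1 / C) (fun e => le_rfl)
    rw [hφ, ← mul_sum] at this
    rw [div_eq_inv_mul, ← one_div]; exact this
  have hg : ∀ e, 0 ≤ g e := by
    intro e
    by_contra hneg
    push Not at hneg
    let r : ℝ := ((∑ e, g e) / C - v) / (- g e)
    have hr : 0 < r := div_pos (by linarith) (by linarith)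
    have h1 := ht ((fun _ => 1 / C) + r • Pi.single e 1) (fun e' => by
      simp only [Pi.add_apply, Pi.smul_apply, smul_eq_mul, Pi.single_apply]
      split_ifs <;> nlinarith)
    rw [map_add, map_smul, hφ, ← mul_sum, smul_eq_mul] at h1
    have h2 : r * φ (Pi.single e 1) = - ((∑ e, g e) / C - v) := by
      change r * g e = _
      have hge : g e ≠ 0 := hneg.ne
      simp only [r]; field_simp
    rw [h2] at h1
    have h3 : 1 / C * ∑ e, g e = (∑ e, g e) / C := by ring
    linarith
  have hload : ∀ p, (∑ e, if inc e p then g e else 0) < u := by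
    intro p
    have := hs _ ⟨Pi.single p 1, single_mem_stdSimplex ℝ p, rfl⟩
    rw [hφ] at this
    convert this using 2 with e
    rw [hA]
    rw [sum_eq_single_of_mem p (mem_univ p)]
    · split_ifs <;> simp
    · intro p' _ hp'; simp [hp']
  obtain ⟨p0, -⟩ := hne e0
  have hu : 0 < u := lt_of_le_of_lt (sum_nonneg fun e _ => by split_ifs <;> simp [hg]) (hload p0)
  have hfin := h (fun e => g e / u) (fun e => div_nonneg (hg e) hu.le) (fun p => by
    have : (∑ e, if inc e p then g e / u else 0) = (∑ e, if inc e p then g e else 0) / u := by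
      rw [sum_div]; exact sum_congr rfl (fun e _ => by split_ifs <;> simp)
    rw [this, div_le_one hu]
    exact (hload p).le)
  rw [← sum_div, div_le_iff₀ hu] at hfin
  rw [lt_div_iff₀ hC0] at hsum
  nlinarith

open Classical in
theorem alon (d : ℕ) (L : Set ℝ → Finset ℝ) (g : Set ℝ → ℝ) (hg : ∀ e, 0 ≤ g e)
    (H : Finset (Set ℝ)) :
    (∀ e ∈ H, (L e).card ≤ d) → (∀ e ∈ H, e.Nonempty) →
    (∀ e ∈ H, ∀ f ∈ H, (e ∩ f).Nonempty → (∃ x ∈ L e, x ∈ f) ∨ ∃ x ∈ L f, x ∈ e) →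
    (∀ e ∈ H, ∀ x ∈ L e, (∑ f ∈ H, if x ∈ f then g f else 0) ≤ 1) →
    ∃ M ⊆ H, (M : Set (Set ℝ)).PairwiseDisjoint id ∧ ∑ e ∈ H, g e ≤ 2 * d * M.card := by
  induction H using Finset.strongInduction with
  | H H ih =>
  intro hL hne hmeet hload
  by_cases hz : ∑ e ∈ H, g e ≤ 0
  · exact ⟨∅, by simp, by simp, by simpa using hz⟩
  push Not at hz
  have hex : ∃ e ∈ H, (∑ f ∈ H, if (e ∩ f).Nonempty then g f else 0) ≤ 2 * d := by
    by_contra hcon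
    push Not at hcon
    obtain ⟨e0, he0, hge0⟩ : ∃ e0 ∈ H, 0 < g e0 := by
      by_contra hh
      push Not at hh
      exact absurd (sum_nonpos hh) (not_le.2 hz)
    have hlow : ∑ e ∈ H, g e * (2 * d) <
        ∑ e ∈ H, g e * ∑ f ∈ H, (if (e ∩ f).Nonempty then g f else 0) := by
      apply sum_lt_sum
      · intro e he; exact mul_le_mul_of_nonneg_left (hcon e he).le (hg e)
      · exact ⟨e0, he0, mul_lt_mul_of_pos_left (hcon e0 he0) hge0⟩
    have hX : ∑ e ∈ H, ∑ f ∈ H, ∑ x ∈ L e, (if x ∈ f then g e * g f else 0) ≤ ∑ e ∈ H, g e * d := by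
      apply sum_le_sum
      intro e he
      rw [sum_comm]
      calc ∑ x ∈ L e, ∑ f ∈ H, (if x ∈ f then g e * g f else 0)
          = ∑ x ∈ L e, g e * ∑ f ∈ H, (if x ∈ f then g f else 0) := by
            apply sum_congr rfl
            intro x _
            rw [mul_sum]
            exact sum_congr rfl (fun f _ => by split_ifs <;> simp)
        _ ≤ ∑ x ∈ L e, g e * 1 :=
            sum_le_sum fun x hx => mul_le_mul_of_nonneg_left (hload e he x hx) (hg e)
        _ = g e * (L e).card := by simp [mul_comm]
        _ ≤ g e * d := mul_le_mul_of_nonneg_left (by exact_mod_cast hL e he) (hg e)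
    have hup : ∑ e ∈ H, g e * ∑ f ∈ H, (if (e ∩ f).Nonempty then g f else 0) ≤
        ∑ e ∈ H, ∑ f ∈ H, ∑ x ∈ L e, (if x ∈ f then g e * g f else 0) +
        ∑ e ∈ H, ∑ f ∈ H, ∑ x ∈ L f, (if x ∈ e then g f * g e else 0) := by
      rw [← sum_add_distrib]
      apply sum_le_sum
      intro e he
      rw [mul_sum, ← sum_add_distrib]
      apply sum_le_sum
      intro f hf
      have hgg : 0 ≤ g e * g f := mul_nonneg (hg e) (hg f)
      have hgg' : 0 ≤ g f * g e := mul_nonneg (hg f) (hg e)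
      have n1 : 0 ≤ ∑ x ∈ L e, (if x ∈ f then g e * g f else 0) :=
        sum_nonneg fun x _ => by split_ifs <;> simp [hgg]
      have n2 : 0 ≤ ∑ x ∈ L f, (if x ∈ e then g f * g e else 0) :=
        sum_nonneg fun x _ => by split_ifs <;> simp [hgg']
      split_ifs with hef
      · rcases hmeet e he f hf hef with ⟨x, hx, hxf⟩ | ⟨x, hx, hxe⟩
        · have := single_le_sum (f := fun x => if x ∈ f then g e * g f else 0)
            (fun x _ => by split_ifs <;> simp [hgg]) hx
          simp only [hxf, if_true] at this
          linarith
        · have := single_le_sum (f := fun x => if x ∈ e then g f * g e else 0)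
            (fun x _ => by split_ifs <;> simp [hgg']) hx
          simp only [hxe, if_true] at this
          have hcm := mul_comm (g f) (g e)
          linarith
      · rw [mul_zero]; linarith
    have hY : ∑ e ∈ H, ∑ f ∈ H, ∑ x ∈ L f, (if x ∈ e then g f * g e else 0) ≤ ∑ e ∈ H, g e * d := by
      rw [sum_comm]; exact hX
    rw [← sum_mul] at hlow hX hY
    linarith
  obtain ⟨e, he, hN⟩ := hex
  let H' := H.filter (fun f => ¬ (e ∩ f).Nonempty)
  have hsub : H' ⊆ H := filter_subset _ _
  have hss : H' ⊂ H := by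
    refine ⟨hsub, fun h => ?_⟩
    have := (mem_filter.1 (h he)).2
    rw [Set.inter_self] at this
    exact this (hne e he)
  obtain ⟨M, hM, hMd, hMs⟩ := ih H' hss (fun e he => hL e (hsub he)) (fun e he => hne e (hsub he))
    (fun e he f hf => hmeet e (hsub he) f (hsub hf))
    (fun e he x hx => le_trans (sum_le_sum_of_subset_of_nonneg hsub
      (fun f _ _ => by split_ifs <;> simp [hg])) (hload e (hsub he) x hx))
  have heM : e ∉ M := fun h => hss.2 (by
    have := (mem_filter.1 (hM h)).2
    rw [Set.inter_self] at this
    exact absurd (hne e he) this)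
  refine ⟨insert e M, insert_subset he (hM.trans hsub), ?_, ?_⟩
  · rw [coe_insert]
    apply Set.PairwiseDisjoint.insert hMd
    intro f hf _
    have := (mem_filter.1 (hM hf)).2
    rw [Set.not_nonempty_iff_eq_empty] at this
    exact Set.disjoint_iff_inter_eq_empty.2 this
  · rw [card_insert_of_notMem heM]
    have h1 := sum_filter_add_sum_filter_not H (fun f => (e ∩ f).Nonempty) g
    rw [sum_filter] at h1
    push_cast
    have : ∑ f ∈ H', g f ≤ 2 * d * M.card := hMs
    simp only [H'] at this
    linarith

theorem tauStar_le_sum (H : Set (Set ℝ)) (S : Finset ℝ) (F : ℝ → ℝ) (hF : ∀ x, 0 ≤ F x)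
    [∀ (e : Set ℝ) x, Decidable (x ∈ e)]
    (hcov : ∀ e ∈ H, 1 ≤ ∑ x ∈ S, if x ∈ e then F x else 0) :
    tauStar H ≤ ∑ x ∈ S, F x := by
  classical
  unfold tauStar
  apply csInf_le
  · refine ⟨0, ?_⟩
    rintro t ⟨f, -, hf, -, rfl⟩
    exact finsum_nonneg hf
  · let f : ℝ → ℝ := fun x => if x ∈ S then F x else 0
    have hsup : Function.support f ⊆ (S : Set ℝ) := by
      intro x hx
      by_contra h
      have h' : x ∉ S := h
      exact hx (by simp [f, h'])
    refine ⟨f, S.finite_toSet.subset hsup, ?_, ?_, ?_⟩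
    · intro x; simp only [f]; split_ifs
      · exact hF x
      · exact le_rfl
    · intro e he
      rw [finsum_mem_def, finsum_eq_sum_of_support_subset (s := S)]
      · refine (hcov e he).trans (le_of_eq ?_)
        apply sum_congr rfl
        intro x hx
        by_cases hxe : x ∈ e <;> simp [hxe, f, hx]
      · intro x hx
        rw [Function.mem_support] at hx
        apply hsup
        intro h0
        apply hx
        by_cases hxe : x ∈ e
        · simpa [hxe] using h0
        · simp [hxe]
    · rw [finsum_eq_sum_of_support_subset f hsup]
      exact sum_congr rfl (fun x hx => by simp [f, hx])

theorem card_le_nu (H : Set (Set ℝ)) (hfin : H.Finite) (M : Finset (Set ℝ)) (hM : ↑M ⊆ H)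
    (hd : (M : Set (Set ℝ)).PairwiseDisjoint id) : M.card ≤ nu H := by
  unfold nu
  apply le_csSup
  · refine ⟨hfin.toFinset.card, ?_⟩
    rintro k ⟨M', hM', -, rfl⟩
    apply card_le_card
    intro e he
    rw [Set.Finite.mem_toFinset]
    exact hM' he
  · exact ⟨M, hM, hd, rfl⟩

theorem exists_left (d : ℕ) (h : Set ℝ) (hh : IsDInterval d h) :
    ∃ L : Finset ℝ, L.card ≤ d ∧ ∀ x ∈ h, ∃ l ∈ L, l ≤ x ∧ Set.Icc l x ⊆ h := by
  classical
  obtain ⟨n, a, b, hn, hab, -, rfl⟩ := hh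
  refine ⟨univ.image a, card_image_le.trans (by simpa using hn), ?_⟩
  intro x hx
  obtain ⟨i, hi⟩ := Set.mem_iUnion.1 hx
  refine ⟨a i, mem_image_of_mem _ (mem_univ _), hi.1, ?_⟩
  intro y hy
  exact Set.mem_iUnion.2 ⟨i, hy.1, hy.2.trans hi.2⟩

theorem exists_two (h : Set ℝ) (hh : IsDInterval 2 h) :
    ∃ I : Fin 2 → Set ℝ, (∀ r, (I r).OrdConnected) ∧ ∀ x, x ∈ h ↔ ∃ r, x ∈ I r := by
  obtain ⟨n, a, b, hn, hab, -, rfl⟩ := hh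
  refine ⟨fun r => if hr : r.val < n then Set.Icc (a ⟨r.val, hr⟩) (b ⟨r.val, hr⟩) else ∅, ?_, ?_⟩
  · intro r
    dsimp only
    split_ifs
    · exact Set.ordConnected_Icc
    · exact Set.ordConnected_empty
  · intro x
    rw [Set.mem_iUnion]
    constructor
    · rintro ⟨i, hi⟩
      refine ⟨⟨i.val, by omega⟩, ?_⟩
      simp only [i.isLt, dif_pos]
      exact hi
    · rintro ⟨r, hr⟩
      by_cases h : r.val < n
      · simp only [h, dif_pos] at hr
        exact ⟨_, hr⟩
      · simp [h] at hr

theorem left_meet (e f : Set ℝ) (Le Lf : Finset ℝ)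
    (he : ∀ x ∈ e, ∃ l ∈ Le, l ≤ x ∧ Set.Icc l x ⊆ e)
    (hf : ∀ x ∈ f, ∃ l ∈ Lf, l ≤ x ∧ Set.Icc l x ⊆ f) (hef : (e ∩ f).Nonempty) :
    (∃ x ∈ Le, x ∈ e ∧ x ∈ f) ∨ ∃ x ∈ Lf, x ∈ e ∧ x ∈ f := by
  obtain ⟨y, hye, hyf⟩ := hef
  obtain ⟨l, hl, hly, hle⟩ := he y hye
  obtain ⟨l', hl', hly', hlf⟩ := hf y hyf
  rcases le_total l l' with h | h
  · right; exact ⟨l', hl', hle ⟨h, hly'⟩, hlf ⟨le_rfl, hly'⟩⟩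
  · left; exact ⟨l, hl, hle ⟨le_rfl, hly⟩, hlf ⟨h, hly⟩⟩

/-- Alon's bound. -/
theorem tauStar_le_two_d (d : ℕ) (H : Set (Set ℝ)) (hfin : H.Finite)
    (hH : ∀ e ∈ H, IsDInterval d e ∧ e.Nonempty) : tauStar H ≤ 2 * d * (nu H : ℝ) := by
  classical
  have hL : ∀ e : Set ℝ, ∃ L : Finset ℝ, e ∈ H → L.card ≤ d ∧
      ∀ x ∈ e, ∃ l ∈ L, l ≤ x ∧ Set.Icc l x ⊆ e := by
    intro e
    by_cases he : e ∈ H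
    · obtain ⟨L, hL⟩ := exists_left d e (hH e he).1
      exact ⟨L, fun _ => hL⟩
    · exact ⟨∅, fun h => absurd h he⟩
  choose L hL using hL
  let Hf := hfin.toFinset
  have mHf : ∀ e, e ∈ Hf ↔ e ∈ H := fun e => Set.Finite.mem_toFinset hfin
  let P : Finset ℝ := Hf.biUnion L
  have hLP : ∀ e ∈ H, ∀ x ∈ L e, x ∈ P := fun e he x hx => mem_biUnion.2 ⟨e, (mHf e).2 he, hx⟩
  obtain ⟨f, hf0, hf1, hf2⟩ := lp_duality (E := Hf) (P := P) (fun e p => p.1 ∈ e.1)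
    (2 * d * (nu H : ℝ)) (by
      rintro ⟨e, he⟩
      have he' := (mHf e).1 he
      obtain ⟨x, hx⟩ := (hH e he').2
      obtain ⟨l, hl, hlx, hsub⟩ := (hL e he').2 x hx
      exact ⟨⟨l, hLP e he' l hl⟩, hsub ⟨le_rfl, hlx⟩⟩) (by
      intro g hg0 hg1
      let g' : Set ℝ → ℝ := fun e => if h : e ∈ Hf then g ⟨e, h⟩ else 0
      have hg' : ∀ e : Hf, g' e.1 = g e := fun e => by simp [g']
      obtain ⟨M, hM, hMd, hMs⟩ := alon d L g' (fun e => by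
          simp only [g']; split_ifs
          · exact hg0 _
          · exact le_rfl) Hf
        (fun e he => (hL e ((mHf e).1 he)).1) (fun e he => (hH e ((mHf e).1 he)).2)
        (fun e he f hf hef => by
          rcases left_meet e f (L e) (L f) (hL e ((mHf e).1 he)).2 (hL f ((mHf f).1 hf)).2 hef with
            ⟨x, h1, _, h3⟩ | ⟨x, h1, h2, _⟩
          · exact Or.inl ⟨x, h1, h3⟩
          · exact Or.inr ⟨x, h1, h2⟩)
        (fun e he x hx => by
          have := hg1 ⟨x, hLP e ((mHf e).1 he) x hx⟩
          rw [← Finset.sum_coe_sort]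
          simpa only [hg'] using this)
      have h1 := card_le_nu H hfin M (fun e he => (mHf e).1 (hM he)) hMd
      rw [← Finset.sum_coe_sort] at hMs
      simp only [hg'] at hMs
      refine hMs.trans ?_
      have h2 : (M.card : ℝ) ≤ nu H := by exact_mod_cast h1
      gcongr)
  let F : ℝ → ℝ := fun x => if h : x ∈ P then f ⟨x, h⟩ else 0
  have hF : ∀ p : P, F p.1 = f p := fun p => by simp [F]
  have := tauStar_le_sum H P F (fun x => by
      simp only [F]; split_ifs
      · exact hf0 _
      · exact le_rfl) (fun e he => by
      have := hf1 ⟨e, (mHf e).2 he⟩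
      rw [← Finset.sum_coe_sort]
      simpa only [hF] using this)
  refine this.trans ?_
  rw [← Finset.sum_coe_sort]
  simpa only [hF] using hf2

/-- The case `d = 2`. -/
theorem tauStar_le_two (H : Set (Set ℝ)) (hfin : H.Finite)
    (hH : ∀ e ∈ H, IsDInterval 2 e ∧ e.Nonempty) : tauStar H ≤ 7/2 * (nu H : ℝ) := by
  classical
  have hL : ∀ e : H, ∃ L : Finset ℝ, ∀ x ∈ e.1, ∃ l ∈ L, l ≤ x ∧ Set.Icc l x ⊆ e.1 := by
    intro e
    obtain ⟨L, -, hL⟩ := exists_left 2 e.1 (hH e.1 e.2).1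
    exact ⟨L, hL⟩
  choose L hL using hL
  have hI := fun e : H => exists_two e.1 (hH e.1 e.2).1
  choose I hI1 hI2 using hI
  have : Fintype H := hfin.fintype
  let P : Finset ℝ := univ.biUnion L
  have hLP : ∀ e, ∀ x ∈ L e, x ∈ P := fun e x hx => mem_biUnion.2 ⟨e, mem_univ _, hx⟩
  let p := P.orderIsoOfFin rfl
  let comp : H → Fin 2 → Set ℕ := fun e r => {k | ∃ hk : k < P.card, (p ⟨k, hk⟩ : ℝ) ∈ I e r}
  have hidx : ∀ x ∈ P, ∃ k, ∃ hk : k < P.card, (p ⟨k, hk⟩ : ℝ) = x := by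
    intro x hx
    refine ⟨(p.symm ⟨x, hx⟩).val, (p.symm ⟨x, hx⟩).isLt, ?_⟩
    simp
  set n := ⌊(7/2 : ℝ) * nu H⌋₊ with hn
  have hnle : (n : ℝ) ≤ 7/2 * nu H := Nat.floor_le (by positivity)
  have hnlt : 7/2 * (nu H : ℝ) < n + 1 := Nat.lt_floor_add_one _
  by_cases hcov : ∀ C : Finset ℕ, C.card ≤ n → ∃ e, ∀ a ∈ C, ∀ r, a ∉ comp e r
  · exfalso
    obtain ⟨M, hMd, hMc⟩ := discrete_two P.card n comp (by
        intro e r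
        constructor
        rintro x ⟨hx, hx'⟩ y ⟨hy, hy'⟩ z ⟨hz1, hz2⟩
        refine ⟨lt_of_le_of_lt hz2 hy, (hI1 e r).out hx' hy' ⟨?_, ?_⟩⟩
        · exact_mod_cast p.monotone (by simpa using hz1)
        · exact_mod_cast p.monotone (by simpa using hz2)) (by
        rintro e r a ⟨h, -⟩; exact h) (by
        intro e
        obtain ⟨x, hx⟩ := (hH e.1 e.2).2
        obtain ⟨l, hl, hlx, hsub⟩ := hL e x hx
        obtain ⟨k, hk, hkl⟩ := hidx l (hLP e l hl)
        obtain ⟨r, hr⟩ := (hI2 e l).1 (hsub ⟨le_rfl, hlx⟩)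
        exact ⟨r, k, hk, by rw [hkl]; exact hr⟩) hcov
    have h1 := card_le_nu H hfin (M.image Subtype.val) (by
        intro e he
        obtain ⟨e', -, rfl⟩ := mem_image.1 (mem_coe.1 he)
        exact e'.2) (by
        intro e he f hf hef
        obtain ⟨e', he', rfl⟩ := mem_image.1 (mem_coe.1 he)
        obtain ⟨f', hf', rfl⟩ := mem_image.1 (mem_coe.1 hf)
        change Disjoint e'.1 f'.1
        rw [Set.disjoint_iff_inter_eq_empty, ← Set.not_nonempty_iff_eq_empty]
        intro hmeet
        have key : ∃ x ∈ P, x ∈ e'.1 ∧ x ∈ f'.1 := by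
          rcases left_meet e'.1 f'.1 (L e') (L f') (hL e') (hL f') hmeet with
            ⟨x, h1, h2⟩ | ⟨x, h1, h2⟩
          · exact ⟨x, hLP _ x h1, h2⟩
          · exact ⟨x, hLP _ x h1, h2⟩
        obtain ⟨x, hxP, hxe, hxf⟩ := key
        obtain ⟨k, hk, hkx⟩ := hidx x hxP
        obtain ⟨r, hr⟩ := (hI2 e' x).1 hxe
        obtain ⟨r', hr'⟩ := (hI2 f' x).1 hxf
        exact hMd e' he' f' hf' (fun h => hef (by rw [h])) k r r' ⟨hk, by rw [hkx]; exact hr⟩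
          ⟨hk, by rw [hkx]; exact hr'⟩)
    rw [card_image_of_injective _ Subtype.val_injective] at h1
    have h2 : (M.card : ℝ) ≤ nu H := by exact_mod_cast h1
    linarith
  · push Not at hcov
    obtain ⟨C, hC, hCc⟩ := hcov
    let pt : ℕ → ℝ := fun k => if hk : k < P.card then (p ⟨k, hk⟩ : ℝ) else 0
    have := tauStar_le_sum H (C.image pt) (fun _ => 1) (fun _ => zero_le_one) (by
      intro e he
      obtain ⟨a, ha, r, hk, hr⟩ := hCc ⟨e, he⟩
      have hpt : pt a = p ⟨a, hk⟩ := by simp only [pt, hk, dif_pos]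
      have hmem : pt a ∈ e := by
        rw [hpt]; exact (hI2 ⟨e, he⟩ _).2 ⟨r, hr⟩
      have := single_le_sum (f := fun x => if x ∈ e then (1:ℝ) else 0)
        (fun x _ => by split_ifs <;> simp) (mem_image_of_mem pt ha)
      simpa only [hmem, if_true] using this)
    refine this.trans ?_
    rw [sum_const, nsmul_eq_mul, mul_one]
    have h3 : ((C.image pt).card : ℝ) ≤ n := by exact_mod_cast card_image_le.trans hC
    linarith

end DInt

/-- For a finite hypergraph of `d`-intervals with `d ≥ 2`,
`τ*(H) ≤ (4d − 6 + 3/d)·ν(H)`. -/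
theorem tauStar_le_four_d_sub_six_add_three_div_d_mul_nu (d : ℕ) (hd : 2 ≤ d)
    (H : Set (Set ℝ)) (hfin : H.Finite)
    (hH : ∀ e ∈ H, IsDInterval d e ∧ e.Nonempty) :
    tauStar H ≤ (4 * (d : ℝ) - 6 + 3 / d) * (nu H : ℝ) := by
  rcases Nat.lt_or_ge 2 d with h | h
  · refine (DInt.tauStar_le_two_d d H hfin hH).trans ?_
    have h3 : (3 : ℝ) ≤ d := by exact_mod_cast h
    have h4 : 0 ≤ 3 / (d : ℝ) := by positivity
    apply mul_le_mul_of_nonneg_right _ (Nat.cast_nonneg _)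
    linarith
  · obtain rfl : d = 2 := le_antisymm h hd
    refine (DInt.tauStar_le_two H hfin hH).trans (le_of_eq ?_)
    norm_num
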